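/- The space of homogeneous polynomials f ∈ R of total degree 2 satisfying D_i f = 0 for all i = 1,…,7 is exactly the two-dimensional ℂ-span of x₁² and ζ₁. -/

import Mathlib

/-!
A quadratic form `f` is recovered from its Hessian `H`, and `D f = 0` for a linear vector field `D`
with matrix `A` says `A * H + H * Aᵀ = 0`. The raising operators generate all `∂_p` from `∂₁`, so
`H` is determined by its first row. The operators `D₁, …, D₆` kill `x₁`, so that row vanishes
outside the highest weight vectors `x₁, x₂, x₁₇, x₅₆` of the corresponding `E₆` subalgebra. The
entry at `x₂` vanishes because invariance under `D₇` gives `2 * H₁₂ = 0`, and the entry at `x₅₆`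
because the invariant pairing of `x_p` with `x_{57-p}` is alternating while `H` is symmetric. The
entries at `x₁` and `x₁₇` are free, and are realised by `x₁²` and `ζ₁`.
-/

noncomputable section

open MvPolynomial
open scoped Fin.NatCast

abbrev Rp : Type := MvPolynomial (Fin 56) ℂ

/-- `xv i` is the variable `x_i` (1-based index). -/
def xv (i : ℕ) : Rp := X ((i - 1 : ℕ) : Fin 56)

/-- The derivation `x_a ∂_b` (1-based indices). -/
def xd (a b : ℕ) (f : Rp) : Rp := xv a * pderiv ((b - 1 : ℕ) : Fin 56) f

def D1 (f : Rp) : Rp := -xd 6 8 f - xd 9 11 f - xd 10 13 f - xd 12 16 f - xd 14 19 f - xd 17 22 f + xd 35 40 f + xd 38 43 f + xd 41 45 f + xd 44 47 f + xd 46 48 f + xd 49 51 f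

def D2 (f : Rp) : Rp := xd 5 7 f + xd 6 9 f + xd 8 11 f - xd 20 23 f - xd 24 26 f - xd 27 29 f - xd 28 30 f - xd 31 33 f - xd 34 37 f + xd 46 49 f + xd 48 51 f + xd 50 52 f

def D3 (f : Rp) : Rp := -xd 5 6 f - xd 7 9 f - xd 13 15 f - xd 16 18 f - xd 19 21 f - xd 22 25 f + xd 32 35 f + xd 36 38 f + xd 39 41 f + xd 42 44 f + xd 48 50 f + xd 51 52 f

def D4 (f : Rp) : Rp := xd 4 5 f - xd 9 10 f - xd 11 13 f - xd 18 20 f - xd 21 24 f - xd 25 28 f - xd 29 32 f - xd 33 36 f - xd 37 39 f - xd 44 46 f - xd 47 48 f + xd 52 53 f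

def D5 (f : Rp) : Rp := xd 3 4 f - xd 10 12 f - xd 13 16 f - xd 15 18 f - xd 24 27 f - xd 26 29 f - xd 28 31 f - xd 30 33 f - xd 39 42 f - xd 41 44 f - xd 45 47 f + xd 53 54 f

def D6 (f : Rp) : Rp := xd 2 3 f - xd 12 14 f - xd 16 19 f - xd 18 21 f - xd 20 24 f - xd 23 26 f - xd 31 34 f - xd 33 37 f - xd 36 39 f - xd 38 41 f - xd 43 45 f + xd 54 55 f

def D7 (f : Rp) : Rp := xd 1 2 f - xd 14 17 f - xd 19 22 f - xd 21 25 f - xd 24 28 f - xd 26 30 f - xd 27 31 f - xd 29 33 f - xd 32 36 f - xd 35 38 f - xd 40 43 f + xd 55 56 f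

def Dop : ℕ → Rp → Rp
  | 1, f => D1 f
  | 2, f => D2 f
  | 3, f => D3 f
  | 4, f => D4 f
  | 5, f => D5 f
  | 6, f => D6 f
  | 7, f => D7 f
  | _, _ => 0

/-- The algebra automorphism `S` with `S(x_r) = x_{57-r}`. -/
def Sm : Rp → Rp := fun f => rename (fun j : Fin 56 => 55 - j) f

/-- `D̃ᵢ = S ∘ Dᵢ ∘ S`. -/
def Dtop (i : ℕ) (f : Rp) : Rp := Sm (Dop i (Sm f))

def aRows : List (List ℤ) :=
  [[0,0,0,0,0,0,1],
   [0,0,0,0,0,1,-1],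
   [0,0,0,0,1,-1,0],
   [0,0,0,1,-1,0,0],
   [0,1,1,-1,0,0,0],
   [1,1,-1,0,0,0,0],
   [0,-1,1,0,0,0,0],
   [-1,1,0,0,0,0,0],
   [1,-1,-1,1,0,0,0],
   [1,0,0,-1,1,0,0],
   [-1,-1,0,1,0,0,0],
   [1,0,0,0,-1,1,0],
   [-1,0,1,-1,1,0,0],
   [1,0,0,0,0,-1,1],
   [0,0,-1,0,1,0,0],
   [-1,0,1,0,-1,1,0],
   [1,0,0,0,0,0,-1],
   [0,0,-1,1,-1,1,0],
   [-1,0,1,0,0,-1,1],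
   [0,1,0,-1,0,1,0],
   [0,0,-1,1,0,-1,1],
   [-1,0,1,0,0,0,-1],
   [0,-1,0,0,0,1,0],
   [0,1,0,-1,1,-1,1],
   [0,0,-1,1,0,0,-1],
   [0,-1,0,0,1,-1,1],
   [0,1,0,0,-1,0,1],
   [0,1,0,-1,1,0,-1]]

def aTab (i r : ℕ) : ℤ := (aRows.getD (i - 1) []).getD (r - 1) 0

/-- The coroot actions `H_r`. -/
def Hop (r : ℕ) (f : Rp) : Rp :=
  ∑ i ∈ Finset.Icc 1 28, (aTab i r : ℂ) • (xd i i f - xd (57 - i) (57 - i) f)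

def zz1 : Rp := xv 1 * xv 17 + xv 2 * xv 14 + xv 3 * xv 12 + xv 4 * xv 10 + xv 5 * xv 9 - xv 6 * xv 7

def zz2 : Rp := Dtop 1 zz1

def zz3 : Rp := Dtop 3 zz2

def zz4 : Rp := Dtop 4 zz2

def zz5 : Rp := Dtop 2 zz4

def zz6 : Rp := Dtop 5 zz4

def zz7 : Rp := Dtop 2 zz6

def zz8 : Rp := Dtop 6 zz6

def zz9 : Rp := Dtop 7 zz8

def zz10 : Rp := Dtop 4 zz7

def zz11 : Rp := Dtop 2 zz8

def zz12 : Rp := Dtop 3 zz10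

def zz13 : Rp := Dtop 2 zz9

def zz14 : Rp := Dtop 4 zz11

def zz15 : Rp := Dtop 4 zz13

def zz16 : Rp := Dtop 3 zz14

def zz17 : Rp := Dtop 5 zz14

def zz18 : Rp := Dtop 3 zz15

def zz19 : Rp := Dtop 1 zz12

def zz20 : Rp := Dtop 7 zz17

def zz21 : Rp := Dtop 3 zz17

def zz22 : Rp := Dtop 6 zz20

def zz23 : Rp := Dtop 1 zz16

def zz24 : Rp := Dtop 5 zz18

def zz25 : Rp := Dtop 4 zz21

def zz26 : Rp := Dtop 1 zz18

def zz27 : Rp := Dtop 3 zz22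

def zz28 : Rp := Dtop 1 zz21

def zz29 : Rp := Dtop 4 zz24

def zz30 : Rp := Dtop 1 zz25

def zz31 : Rp := Dtop 5 zz26

def zz32 : Rp := Dtop 4 zz27

def zz33 : Rp := Dtop 2 zz25

def zz34 : Rp := Dtop 1 zz29

def zz35 : Rp := Dtop 1 zz27

def zz36 : Rp := Dtop 5 zz32

def zz37 : Rp := Dtop 3 zz30

def zz38 : Rp := Dtop 2 zz29

def zz39 : Rp := Dtop 1 zz32

def zz40 : Rp := Dtop 1 zz33

def zz41 : Rp := Dtop 1 zz34

def zz42 : Rp := Dtop 2 zz32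

def zz43 : Rp := Dtop 1 zz36

def zz44 : Rp := Dtop 2 zz37

def zz45 : Rp := Dtop 1 zz38

def zz46 : Rp := Dtop 3 zz39

def zz47 : Rp := Dtop 2 zz36

def zz48 : Rp := Dtop 4 zz44

def zz49 : Rp := Dtop 2 zz41

def zz50 : Rp := Dtop 1 zz42

def zz51 : Rp := Dtop 3 zz43

def zz52 : Rp := Dtop 4 zz47

def zz53 : Rp := Dtop 5 zz48

def zz54 : Rp := Dtop 4 zz49

def zz55 : Rp := Dtop 3 zz50

def zz56 : Rp := Dtop 1 zz47

def zz57 : Rp := Dtop 4 zz51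

def zz58 : Rp := Dtop 3 zz52

def zz59 : Rp := Dtop 6 zz53

def zz60 : Rp := Dtop 5 zz54

def zz61 : Rp := Dtop 4 zz55

def zz62 : Rp := Dtop 3 zz56

def zz63 : Rp := Dtop 1 zz52

def zz64 : Rp := Dtop 7 zz59

def zz65 : Rp := Dtop 6 zz60

def zz66 : Rp := Dtop 5 zz61

def zz67 : Rp := Dtop 4 zz62

def zz68 : Rp := Dtop 2 zz57

def zz69 : Rp := Dtop 3 zz63

def zz70 : Rp := Dtop 1 zz58

def zetaList : List Rp := [zz1, zz2, zz3, zz4, zz5, zz6, zz7, zz8, zz9, zz10, zz11, zz12, zz13, zz14, zz15, zz16, zz17, zz18, zz19, zz20, zz21, zz22, zz23, zz24, zz25, zz26, zz27, zz28, zz29, zz30, zz31, zz32, zz33, zz34, zz35, zz36, zz37, zz38, zz39, zz40, zz41, zz42, zz43, zz44, zz45, zz46, zz47, zz48, zz49, zz50, zz51, zz52, zz53, zz54, zz55, zz56, zz57, zz58, zz59, zz60, zz61, zz62, zz63, zz64, zz65, zz66, zz67, zz68, zz69, zz70]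

/-- `zeta j` is `ζ_j` for `1 ≤ j ≤ 133` (1-based). -/
def zeta (j : ℕ) : Rp :=
  if j ≤ 70 then zetaList.getD (j - 1) 0 else Sm (zetaList.getD (133 - j) 0)

/-- The quartic singular vector `ς` of weight `λ₆`. -/
def sigmaP : Rp := zeta 1 * zeta 19 - zeta 2 * zeta 12 + zeta 3 * zeta 10 - zeta 4 * zeta 7 + zeta 5 * zeta 6

/-- The cubic singular vector `ϑ` of weight `λ₇`. -/
def thetaP : Rp :=
  ((1 : ℂ)/2) • (xv 1 * zeta 64) - xv 2 * zeta 59 + xv 3 * zeta 53 - xv 4 * zeta 48 + xv 5 * zeta 44 - xv 6 * zeta 40 - xv 7 * zeta 37 + xv 8 * zeta 33 + xv 9 * zeta 30 + xv 10 * zeta 28 - xv 11 * zeta 25 + xv 12 * zeta 23 - xv 13 * zeta 21 + xv 14 * zeta 19 + xv 15 * zeta 17 - xv 16 * zeta 16 + xv 18 * zeta 14 - xv 19 * zeta 12 + xv 20 * zeta 11 + xv 21 * zeta 10 + xv 23 * zeta 8 + xv 24 * zeta 7 + xv 26 * zeta 6 + xv 27 * zeta 5 + xv 29 * zeta 4 +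 xv 32 * zeta 3 + xv 35 * zeta 2 + xv 40 * zeta 1

def IsetE7 : Finset ℕ := {1,2,3,5,6,9,10,11,12,15,17,18,19,21,22,26,27,28,29,33,34,35,36,40,41,42,43,44,50,51,52,53,54,55,58,63}

/-- Cartan's quartic `E₇`-invariant `η`. -/
def etaP : Rp :=
  4 * ((∑ i ∈ IsetE7, zeta i * zeta (134 - i)) -
        ∑ r ∈ Finset.Icc 1 63 \ IsetE7, zeta r * zeta (134 - r))
  + 4 * zeta 70 * (zeta 70 - 2 * zeta 68 - 3 * zeta 69 + 4 * zeta 67 - 3 * zeta 66 + 2 * zeta 65 - zeta 64)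
  + zeta 68 * (7 * zeta 68 + 16 * zeta 69 - 24 * zeta 67 + 18 * zeta 66 - 12 * zeta 65 + 6 * zeta 64)
  + 4 * zeta 69 * (3 * zeta 69 - 8 * zeta 67 + 6 * zeta 66 - 4 * zeta 65 + 2 * zeta 64)
  + 4 * zeta 67 * (6 * zeta 67 - 9 * zeta 66 + 6 * zeta 65 - 3 * zeta 64)
  + zeta 66 * (15 * zeta 66 - 20 * zeta 65 + 10 * zeta 64)
  + 8 * zeta 65 * (zeta 65 - zeta 64)
  + 3 * zeta 64 ^ 2

/-- The iterated partial derivative `∂^m = ∂₁^{m₁} ∘ ⋯ ∘ ∂₅₆^{m₅₆}`. -/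
def pdMulti (m : Fin 56 →₀ ℕ) (f : Rp) : Rp :=
  (List.finRange 56).foldr (fun i g => (fun h => pderiv i h)^[m i] g) f

/-- The constant-coefficient differential operator `𝒟` obtained from `η` by
replacing each variable by the corresponding partial derivative. -/
def Dcal (f : Rp) : Rp := ∑ m ∈ etaP.support, MvPolynomial.coeff m etaP • pdMulti m f

/-- The specialization `φ` killing `x₃, …, x₅₄`. -/
def phiP : Rp →ₐ[ℂ] Rp :=
  aeval (fun j : Fin 56 => if (j : ℕ) ≤ 1 ∨ 54 ≤ (j : ℕ) then X j else 0)

def edgesE7 : List (ℕ × ℕ) := [(1,3),(3,4),(2,4),(4,5),(5,6),(6,7)]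

/-- The Cartan matrix of `E₇` (Bourbaki-style labeling, node 2 attached to node 4). -/
def cartanE7 (i j : ℕ) : ℤ :=
  if i = j then 2 else if (i, j) ∈ edgesE7 ∨ (j, i) ∈ edgesE7 then -1 else 0

def epsE7 (i : ℕ) : ℤ := if i = 1 ∨ i = 3 then -1 else 1

section Hessian

variable {σ R : Type*} [CommRing R]

/-- The matrix of constant terms of the second partial derivatives of `f`. For a quadratic form
it is the Gram matrix of its polarization. -/
def hessianAtZero : MvPolynomial σ R →ₗ[R] Matrix σ σ R where
  toFun f := Matrix.of fun p r => constantCoeff (pderiv p (pderiv r f))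
  map_add' f g := by ext; simp
  map_smul' c f := by ext; simp [smul_eq_C_mul]

lemma hessianAtZero_apply (f : MvPolynomial σ R) (p r : σ) :
    hessianAtZero f p r = constantCoeff (pderiv p (pderiv r f)) := rfl

lemma pderiv_comm (p r : σ) (f : MvPolynomial σ R) :
    pderiv p (pderiv r f) = pderiv r (pderiv p f) := by
  classical
  have h : ⁅pderiv (R := R) p, pderiv (R := R) r⁆ = 0 := by
    refine derivation_ext fun j => ?_
    simp [Derivation.commutator_apply, pderiv_X, Pi.single_apply, apply_ite]
  simpa [Derivation.commutator_apply, sub_eq_zero] using congr($h f)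

lemma isSymm_hessianAtZero (f : MvPolynomial σ R) : (hessianAtZero f).IsSymm := by
  ext p r
  simp only [Matrix.transpose_apply, hessianAtZero_apply, pderiv_comm]

lemma hessianAtZero_X_mul_X [DecidableEq σ] (a b : σ) :
    hessianAtZero (X a * X b : MvPolynomial σ R) = Matrix.single a b 1 + Matrix.single b a 1 := by
  ext p r
  simp only [hessianAtZero_apply, Derivation.leibniz, pderiv_X, Pi.single_apply, smul_eq_mul,
    map_add, Matrix.add_apply, Matrix.single_apply]
  split_ifs <;> simp_all

lemma hessianAtZero_X_mul_pderiv [Fintype σ] [DecidableEq σ] (a b : σ) (f : MvPolynomial σ R) :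
    hessianAtZero (X a * pderiv b f) =
      Matrix.single a b 1 * hessianAtZero f + hessianAtZero f * Matrix.single b a 1 := by
  ext p r
  simp only [hessianAtZero_apply, Derivation.leibniz, pderiv_X, Pi.single_apply, smul_eq_mul,
    map_add, map_mul, constantCoeff_X, Matrix.add_apply, Matrix.mul_apply, Matrix.single_apply]
  rw [pderiv_comm r b]
  simp only [ite_and, ite_mul, mul_ite, one_mul, mul_one, zero_mul, mul_zero,
    Finset.sum_ite_eq, Finset.sum_ite_irrel, Finset.sum_const_zero, Finset.mem_univ, if_true]
  split_ifs <;> simp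

lemma eq_zero_of_forall_pderiv_eq_zero [Finite σ] [IsAddTorsionFree R] {n : ℕ}
    {f : MvPolynomial σ R} (hf : f.IsHomogeneous n) (hn : n ≠ 0) (h : ∀ p, pderiv p f = 0) :
    f = 0 := by
  cases nonempty_fintype σ
  have euler : n • f = 0 := by simp [← hf.sum_X_mul_pderiv, h]
  ext d
  have hd : n • coeff d f = 0 := by rw [← coeff_smul, euler, coeff_zero]
  rwa [coeff_zero, ← smul_eq_zero_iff_right hn]

lemma eq_zero_of_hessianAtZero_eq_zero [Finite σ] [IsAddTorsionFree R] {f : MvPolynomial σ R}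
    (hf : f.IsHomogeneous 2) (h : hessianAtZero f = 0) : f = 0 := by
  refine eq_zero_of_forall_pderiv_eq_zero hf two_ne_zero fun r => ?_
  refine eq_zero_of_forall_pderiv_eq_zero hf.pderiv one_ne_zero fun p => ?_
  have hconst := totalDegree_eq_zero_iff_eq_C.mp
    ((totalDegree_zero_iff_isHomogeneous (p := pderiv p (pderiv r f))).mpr hf.pderiv.pderiv)
  rw [hconst, ← constantCoeff_eq, ← hessianAtZero_apply, h, Matrix.zero_apply, C_0]

variable [Fintype σ] [DecidableEq σ]

/-- The derivation `∑ A a b • x_a ∂_b` of the polynomial ring attached to the matrix `A`. -/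
def linearVectorField :
    Matrix σ σ R →ₗ[R] Derivation R (MvPolynomial σ R) (MvPolynomial σ R) :=
  Matrix.liftLinear R fun a b => LinearMap.toSpanSingleton R _ ((X a : MvPolynomial σ R) • pderiv b)

lemma linearVectorField_single (a b : σ) (c : R) (f : MvPolynomial σ R) :
    linearVectorField (Matrix.single a b c) f = c • (X a * pderiv b f) := by
  simp [linearVectorField]

lemma hessianAtZero_linearVectorField (A : Matrix σ σ R) (f : MvPolynomial σ R) :
    hessianAtZero (linearVectorField A f) =
      A * hessianAtZero f + hessianAtZero f * A.transpose := by
  induction A using Matrix.induction_on' with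
  | h_zero => simp
  | h_add A B hA hB =>
    simp only [map_add, Derivation.add_apply, hA, hB, Matrix.add_mul, Matrix.transpose_add,
      Matrix.mul_add]
    abel
  | h_std_basis a b c =>
    rw [linearVectorField_single, map_smul, hessianAtZero_X_mul_pderiv, smul_add,
      ← Matrix.smul_mul, ← Matrix.mul_smul, Matrix.smul_single, Matrix.smul_single,
      smul_eq_mul, mul_one, Matrix.transpose_single]

end Hessian

section RaisingEdges

/-- An arrow of the weight diagram of the 56-dimensional module: the term
`sign • x_source ∂_target` of one of the seven derivations, with variables numbered from `0`. -/
structure RaisingEdge where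
  source : Fin 56
  target : Fin 56
  sign : ℤˣ
  deriving DecidableEq

/-- The terms of the derivation `Dop i`. -/
def raisingEdges : ℕ → List RaisingEdge
  | 1 =>
    [⟨5, 7, -1⟩, ⟨8, 10, -1⟩, ⟨9, 12, -1⟩, ⟨11, 15, -1⟩, ⟨13, 18, -1⟩, ⟨16, 21, -1⟩,
      ⟨34, 39, 1⟩, ⟨37, 42, 1⟩, ⟨40, 44, 1⟩, ⟨43, 46, 1⟩, ⟨45, 47, 1⟩, ⟨48, 50, 1⟩]
  | 2 =>
    [⟨4, 6, 1⟩, ⟨5, 8, 1⟩, ⟨7, 10, 1⟩, ⟨19, 22, -1⟩, ⟨23, 25, -1⟩, ⟨26, 28, -1⟩,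
      ⟨27, 29, -1⟩, ⟨30, 32, -1⟩, ⟨33, 36, -1⟩, ⟨45, 48, 1⟩, ⟨47, 50, 1⟩, ⟨49, 51, 1⟩]
  | 3 =>
    [⟨4, 5, -1⟩, ⟨6, 8, -1⟩, ⟨12, 14, -1⟩, ⟨15, 17, -1⟩, ⟨18, 20, -1⟩, ⟨21, 24, -1⟩,
      ⟨31, 34, 1⟩, ⟨35, 37, 1⟩, ⟨38, 40, 1⟩, ⟨41, 43, 1⟩, ⟨47, 49, 1⟩, ⟨50, 51, 1⟩]
  | 4 =>
    [⟨3, 4, 1⟩, ⟨8, 9, -1⟩, ⟨10, 12, -1⟩, ⟨17, 19, -1⟩, ⟨20, 23, -1⟩, ⟨24, 27, -1⟩,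
      ⟨28, 31, -1⟩, ⟨32, 35, -1⟩, ⟨36, 38, -1⟩, ⟨43, 45, -1⟩, ⟨46, 47, -1⟩, ⟨51, 52, 1⟩]
  | 5 =>
    [⟨2, 3, 1⟩, ⟨9, 11, -1⟩, ⟨12, 15, -1⟩, ⟨14, 17, -1⟩, ⟨23, 26, -1⟩, ⟨25, 28, -1⟩,
      ⟨27, 30, -1⟩, ⟨29, 32, -1⟩, ⟨38, 41, -1⟩, ⟨40, 43, -1⟩, ⟨44, 46, -1⟩, ⟨52, 53, 1⟩]
  | 6 =>
    [⟨1, 2, 1⟩, ⟨11, 13, -1⟩, ⟨15, 18, -1⟩, ⟨17, 20, -1⟩, ⟨19, 23, -1⟩, ⟨22, 25, -1⟩,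
      ⟨30, 33, -1⟩, ⟨32, 36, -1⟩, ⟨35, 38, -1⟩, ⟨37, 40, -1⟩, ⟨42, 44, -1⟩, ⟨53, 54, 1⟩]
  | 7 =>
    [⟨0, 1, 1⟩, ⟨13, 16, -1⟩, ⟨18, 21, -1⟩, ⟨20, 24, -1⟩, ⟨23, 27, -1⟩, ⟨25, 29, -1⟩,
      ⟨26, 30, -1⟩, ⟨28, 32, -1⟩, ⟨31, 35, -1⟩, ⟨34, 37, -1⟩, ⟨39, 42, -1⟩, ⟨54, 55, 1⟩]
  | _ => []

/-- The integer matrix `A` for which `Dop i = ∑ A a b • x_a ∂_b`. -/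
def raisingMatrix (i : ℕ) : Matrix (Fin 56) (Fin 56) ℤ :=
  ((raisingEdges i).map fun e => Matrix.single e.source e.target (e.sign : ℤ)).sum

lemma Dop_eq_linearVectorField (i : ℕ) (f : Rp) :
    Dop i f = linearVectorField ((raisingMatrix i).map (Int.castRingHom ℂ)) f := by
  obtain _ | _ | _ | _ | _ | _ | _ | _ | i := i <;>
    simp [-Int.coe_castRingHom, Dop, D1, D2, D3, D4, D5, D6, D7, xd, xv, raisingMatrix,
      raisingEdges, Matrix.map_add, Matrix.map_single, linearVectorField_single] <;> abel

lemma raisingMatrix_source : ∀ i ∈ Finset.Icc 1 7, ∀ e ∈ raisingEdges i,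
    raisingMatrix i e.source = Pi.single e.target (e.sign : ℤ) := by
  decide +kernel

lemma raisingMatrix_zero : ∀ i ∈ Finset.Icc 1 6, raisingMatrix i 0 = 0 := by
  decide +kernel

lemma exists_edge_source_lt : ∀ p : Fin 56, p ≠ 0 →
    ∃ i ∈ Finset.Icc 1 7, ∃ e ∈ raisingEdges i, e.source < p ∧ e.target = p := by
  decide +kernel

-- The exceptions are the highest weight vectors `x₁, x₂, x₁₇, x₅₆` of `E₆`, numbered from `0`.
lemma exists_E6_edge : ∀ p : Fin 56, p ∉ ({0, 1, 16, 55} : Finset (Fin 56)) →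
    ∃ i ∈ Finset.Icc 1 6, ∃ e ∈ raisingEdges i, e.target = p := by
  decide +kernel

lemma exists_rev_edge : ∀ i ∈ Finset.Icc 1 7, ∀ e ∈ raisingEdges i,
    ∃ e' ∈ raisingEdges i, e'.source = e.target.rev ∧ e'.target = e.source.rev := by
  decide +kernel

lemma raisingEdge_induction {P : Fin 56 → Prop} (zero : P 0)
    (step : ∀ i ∈ Finset.Icc 1 7, ∀ e ∈ raisingEdges i, P e.source → P e.target) (p : Fin 56) :
    P p := by
  induction p using WellFoundedLT.induction with
  | ind p ih =>
    obtain rfl | hp := eq_or_ne p 0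
    · exact zero
    · obtain ⟨i, hi, e, he, hlt, rfl⟩ := exists_edge_source_lt p hp
      exact step i hi e he (ih _ hlt)

end RaisingEdges

section RaisingInvariant

variable {K : Type*} [CommRing K]

/-- Infinitesimal invariance of the bilinear form with Gram matrix `H` under the seven simple
raising operators. The Hessians of singular quadratic forms are the symmetric such matrices. -/
def IsRaisingInvariant (H : Matrix (Fin 56) (Fin 56) K) : Prop :=
  ∀ i ∈ Finset.Icc 1 7, (raisingMatrix i).map (Int.castRingHom K) * H +
    H * ((raisingMatrix i).map (Int.castRingHom K)).transpose = 0

lemma map_raisingMatrix_source {i : ℕ} (hi : i ∈ Finset.Icc 1 7) {e : RaisingEdge}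
    (he : e ∈ raisingEdges i) :
    (raisingMatrix i).map (Int.castRingHom K) e.source = Pi.single e.target ((e.sign : ℤ) : K) := by
  ext c
  obtain rfl | hc := eq_or_ne c e.target <;>
    simp [Matrix.map_apply, raisingMatrix_source i hi e he, *]

namespace IsRaisingInvariant

variable {H : Matrix (Fin 56) (Fin 56) K}

lemma sign_smul_add_dotProduct (hH : IsRaisingInvariant H) {i : ℕ} (hi : i ∈ Finset.Icc 1 7)
    {e : RaisingEdge} (he : e ∈ raisingEdges i) (r : Fin 56) :
    e.sign • H e.target r + H e.source ⬝ᵥ (raisingMatrix i).map (Int.castRingHom K) r = 0 := by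
  have hentry : (raisingMatrix i).map (Int.castRingHom K) e.source ⬝ᵥ (fun c => H c r) +
      H e.source ⬝ᵥ (raisingMatrix i).map (Int.castRingHom K) r = 0 :=
    congr($(hH i hi) e.source r)
  rwa [map_raisingMatrix_source hi he, single_dotProduct, ← zsmul_eq_mul, ← Units.smul_def]
    at hentry

lemma sign_smul_add_sign_smul (hH : IsRaisingInvariant H) {i : ℕ} (hi : i ∈ Finset.Icc 1 7)
    {e e' : RaisingEdge} (he : e ∈ raisingEdges i) (he' : e' ∈ raisingEdges i) :
    e.sign • H e.target e'.source + e'.sign • H e.source e'.target = 0 := by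
  have h := hH.sign_smul_add_dotProduct hi he e'.source
  rwa [map_raisingMatrix_source hi he', dotProduct_single, mul_comm, ← zsmul_eq_mul,
    ← Units.smul_def] at h

lemma row_target_eq_zero (hH : IsRaisingInvariant H) {i : ℕ} (hi : i ∈ Finset.Icc 1 7)
    {e : RaisingEdge} (he : e ∈ raisingEdges i) (h : H e.source = 0) : H e.target = 0 := by
  ext r
  simpa [h, smul_eq_zero_iff_eq] using hH.sign_smul_add_dotProduct hi he r

lemma eq_zero_of_row_zero (hH : IsRaisingInvariant H) (h : H 0 = 0) : H = 0 :=
  funext (raisingEdge_induction h fun _ hi _ he => hH.row_target_eq_zero hi he)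

lemma apply_zero_target (hH : IsRaisingInvariant H) (hsymm : H.IsSymm) {i : ℕ}
    (hi : i ∈ Finset.Icc 1 6) {e : RaisingEdge} (he : e ∈ raisingEdges i) :
    H 0 e.target = 0 := by
  have hrow : (raisingMatrix i).map (Int.castRingHom K) 0 = 0 := by
    ext c
    simp [Matrix.map_apply, raisingMatrix_zero i hi]
  have h := hH.sign_smul_add_dotProduct (Finset.Icc_subset_Icc_right (by simp) hi) he 0
  rwa [hrow, dotProduct_zero, add_zero, smul_eq_zero_iff_eq, hsymm.apply] at h

lemma apply_rev_target_eq_zero_iff (hH : IsRaisingInvariant H) {i : ℕ}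
    (hi : i ∈ Finset.Icc 1 7) {e : RaisingEdge} (he : e ∈ raisingEdges i) :
    H e.target e.target.rev = 0 ↔ H e.source e.source.rev = 0 := by
  obtain ⟨e', he', hsource, htarget⟩ := exists_rev_edge i hi e he
  have h := hH.sign_smul_add_sign_smul hi he he'
  rw [hsource, htarget] at h
  constructor <;> intro h0 <;> simpa [h0, smul_eq_zero_iff_eq] using h

lemma apply_rev_eq_zero_iff (hH : IsRaisingInvariant H) (p : Fin 56) :
    H p p.rev = 0 ↔ H 0 (Fin.last 55) = 0 :=
  raisingEdge_induction (P := fun p => H p p.rev = 0 ↔ H 0 (Fin.last 55) = 0) Iff.rfl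
    (fun _ hi _ he h => (hH.apply_rev_target_eq_zero_iff hi he).trans h) p

variable [IsAddTorsionFree K]

lemma apply_zero_one (hH : IsRaisingInvariant H) (hsymm : H.IsSymm) : H 0 1 = 0 := by
  have h := hH.sign_smul_add_sign_smul (i := 7) (e := ⟨0, 1, 1⟩) (e' := ⟨0, 1, 1⟩)
    (by decide) (by decide) (by decide)
  rw [one_smul, one_smul, hsymm.apply] at h
  exact self_eq_neg.mp (eq_neg_of_add_eq_zero_left h)

lemma apply_zero_last (hH : IsRaisingInvariant H) (hsymm : H.IsSymm) :
    H 0 (Fin.last 55) = 0 := by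
  have h₂ := hH.sign_smul_add_sign_smul (i := 2) (e := ⟨23, 25, -1⟩) (e' := ⟨30, 32, -1⟩)
    (by decide) (by decide) (by decide)
  have h₅ := hH.sign_smul_add_sign_smul (i := 5) (e := ⟨25, 28, -1⟩) (e' := ⟨27, 30, -1⟩)
    (by decide) (by decide) (by decide)
  have h₇ := hH.sign_smul_add_sign_smul (i := 7) (e := ⟨23, 27, -1⟩) (e' := ⟨28, 32, -1⟩)
    (by decide) (by decide) (by decide)
  simp only [Units.neg_smul, one_smul] at h₂ h₅ h₇
  -- The pair `(23, 32)` moves to `(28, 27)` and back from `(27, 28)` with three sign changes.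
  have hself : H 23 32 = -H 23 32 := by
    rw [hsymm.apply 27 28] at h₅
    linear_combination h₅ - h₂ - h₇
  exact (hH.apply_rev_eq_zero_iff 23).mp (self_eq_neg.mp hself)

theorem eq_zero (hH : IsRaisingInvariant H) (hsymm : H.IsSymm) (h00 : H 0 0 = 0)
    (h016 : H 0 16 = 0) : H = 0 := by
  refine hH.eq_zero_of_row_zero (funext fun p => ?_)
  by_cases hp : p ∈ ({0, 1, 16, 55} : Finset (Fin 56))
  · simp only [Finset.mem_insert, Finset.mem_singleton] at hp
    obtain rfl | rfl | rfl | rfl := hp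
    exacts [h00, hH.apply_zero_one hsymm, h016, hH.apply_zero_last hsymm]
  · obtain ⟨i, hi, e, he, rfl⟩ := exists_E6_edge p hp
    exact hH.apply_zero_target hsymm hi he

end IsRaisingInvariant

end RaisingInvariant

section SingularQuadraticForms

lemma isRaisingInvariant_hessianAtZero {f : Rp} (hf : ∀ i ∈ Finset.Icc 1 7, Dop i f = 0) :
    IsRaisingInvariant (hessianAtZero f) := fun i hi => by
  rw [← hessianAtZero_linearVectorField, ← Dop_eq_linearVectorField, hf i hi, map_zero]

/-- The space of quadratic forms annihilated by the seven simple raising operators. -/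
def singularQuadraticForms : Submodule ℂ Rp :=
  homogeneousSubmodule (Fin 56) ℂ 2 ⊓ ⨅ i ∈ Finset.Icc 1 7,
    (linearVectorField ((raisingMatrix i).map (Int.castRingHom ℂ))).toLinearMap.ker

lemma mem_singularQuadraticForms {f : Rp} :
    f ∈ singularQuadraticForms ↔ f.IsHomogeneous 2 ∧ ∀ i ∈ Finset.Icc 1 7, Dop i f = 0 := by
  simp only [singularQuadraticForms, Submodule.mem_inf, mem_homogeneousSubmodule,
    Submodule.mem_iInf, LinearMap.mem_ker, Derivation.coeFn_coe,
    Dop_eq_linearVectorField]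

lemma xv_one_sq_mem_singularQuadraticForms : xv 1 ^ 2 ∈ singularQuadraticForms := by
  refine mem_singularQuadraticForms.mpr ⟨(isHomogeneous_X _ _).pow 2, fun i hi => ?_⟩
  obtain ⟨h1, h7⟩ := Finset.mem_Icc.mp hi
  interval_cases i <;>
    simp [Dop, D1, D2, D3, D4, D5, D6, D7, xd, xv, Derivation.leibniz_pow, pderiv_X]

lemma zz1_mem_singularQuadraticForms : zz1 ∈ singularQuadraticForms := by
  have hmul (a b : ℕ) : (xv a * xv b).IsHomogeneous 2 :=
    (isHomogeneous_X _ _).mul (isHomogeneous_X _ _)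
  refine mem_singularQuadraticForms.mpr ⟨?_, fun i hi => ?_⟩
  · exact (((((hmul 1 17).add (hmul 2 14)).add (hmul 3 12)).add (hmul 4 10)).add (hmul 5 9)).sub
      (hmul 6 7)
  · obtain ⟨h1, h7⟩ := Finset.mem_Icc.mp hi
    interval_cases i <;>
      simp [Dop, D1, D2, D3, D4, D5, D6, D7, zz1, xd, xv, Derivation.leibniz, pderiv_X] <;> ring

lemma hessianAtZero_xv_one_sq : hessianAtZero (xv 1 ^ 2) = Matrix.single 0 0 2 := by
  rw [sq, xv, hessianAtZero_X_mul_X, ← Matrix.single_add, one_add_one_eq_two]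
  rfl

lemma hessianAtZero_zz1_zero_zero : hessianAtZero zz1 0 0 = 0 := by
  simp [zz1, xv, hessianAtZero_X_mul_X]

lemma hessianAtZero_zz1_zero_sixteen : hessianAtZero zz1 0 16 = 1 := by
  simp [zz1, xv, hessianAtZero_X_mul_X]

theorem eq_zero_of_mem_singularQuadraticForms {f : Rp} (hf : f ∈ singularQuadraticForms)
    (h00 : hessianAtZero f 0 0 = 0) (h016 : hessianAtZero f 0 16 = 0) : f = 0 := by
  obtain ⟨hhom, hD⟩ := mem_singularQuadraticForms.mp hf
  exact eq_zero_of_hessianAtZero_eq_zero hhom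
    ((isRaisingInvariant_hessianAtZero hD).eq_zero (isSymm_hessianAtZero f) h00 h016)

theorem singularQuadraticForms_eq_span :
    singularQuadraticForms = Submodule.span ℂ {xv 1 ^ 2, zz1} := by
  have hsq := xv_one_sq_mem_singularQuadraticForms
  have hzz := zz1_mem_singularQuadraticForms
  refine le_antisymm (fun f hf => Submodule.mem_span_pair.mpr ?_)
    (Submodule.span_le.mpr (Set.pair_subset hsq hzz))
  refine ⟨hessianAtZero f 0 0 / 2, hessianAtZero f 0 16, (sub_eq_zero.mp ?_).symm⟩
  refine eq_zero_of_mem_singularQuadraticForms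
    (sub_mem hf (add_mem (Submodule.smul_mem _ _ hsq) (Submodule.smul_mem _ _ hzz))) ?_ ?_ <;>
  simp [hessianAtZero_xv_one_sq, hessianAtZero_zz1_zero_zero, hessianAtZero_zz1_zero_sixteen]

lemma linearIndependent_xv_one_sq_zz1 : LinearIndependent ℂ ![xv 1 ^ 2, zz1] := by
  refine LinearIndependent.pair_iff.mpr fun s t hst => ?_
  constructor
  · simpa [hessianAtZero_xv_one_sq, hessianAtZero_zz1_zero_zero]
      using congr(hessianAtZero $hst 0 0)
  · simpa [hessianAtZero_xv_one_sq, hessianAtZero_zz1_zero_sixteen]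
      using congr(hessianAtZero $hst 0 16)

end SingularQuadraticForms

theorem degree_two_singular_vectors :
    (∀ f : Rp, (f.IsHomogeneous 2 ∧ ∀ i ∈ Finset.Icc 1 7, Dop i f = 0) ↔
        f ∈ Submodule.span ℂ ({xv 1 ^ 2, zz1} : Set Rp)) ∧
    LinearIndependent ℂ ![xv 1 ^ 2, zz1] := by
  refine ⟨fun f => ?_, linearIndependent_xv_one_sq_zz1⟩
  rw [← mem_singularQuadraticForms, singularQuadraticForms_eq_span]
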